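/- arXiv:1806.11069 — 2 statements merged into one kernel-verified Lean document; each statement's English description precedes it below -/
import Mathlib

section
/- Let K_1, K_2, K_3, K_4 be convex bodies in ℝ² (compact convex sets with nonempty interior) that pairwise touch (for all i ≠ j, K_i ∩ K_j ≠ ∅ and interior(K_i) ∩ interior(K_j) = ∅), and suppose K_1 ∩ K_2 ∩ K_3 ∩ K_4 = ∅. Then there is an index i such that K_i is contained in the closure of a bounded connected component of the complement ℝ² \ ⋃_{j ≠ i} K_j. -/
/-! The theorem is a form of the non-planarity of `K₅`, proved with angles.

Choose `v i` in the interior of `K i` and a touching point `p i j = p j i` of `K i` and `K j`, and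
join `v i` to `v j` by the path `v i — p i j — v j`. Because the four bodies have no common point,
the paths of two disjoint pairs `{i, j}` and `{k, l}` do not meet. Let `θ_i(j, k)` be the angle
swept by the path from `v j` to `v k`, seen from `v i`. If every `v i` lay in an unbounded
component of the complement of the other three bodies, then the closed path through the other
three points would have winding number zero around `v i` (`hexagon_eq_zero`):
`θ_i(j, k) + θ_i(k, l) + θ_i(l, j) = 0`. On the other hand, the direction from a point of one path
to a point of a disjoint path is a nowhere vanishing function on a square, so its total turning
along the boundary is zero (`square`, `sweep_square`):
`θ_i(k, l) + θ_l(i, j) + θ_j(l, k) + θ_k(j, i) = 0`.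
Write `θ_i(j, k) = arg (v k - v i) - arg (v j - v i) + 2πn` with `n` an integer. The four winding
equations say that the sum of the twelve integers `n` is even, while the three square equations,
using that `arg (v i - v j)` and `arg (v j - v i)` differ by an odd multiple of `π`, say that it
is odd (`core`). Hence some `v i` lies in a bounded component, which contains the interior of
`K i`, and its closure contains `K i`.
-/

open Complex Filter Topology

/-! ### Angles swept by segments and two-segment paths -/

/-- The angle in `(-π, π]` swept by the segment from `a` to `b`, seen from `q`; it is the
continuous sweep as long as `q` is not on the segment. -/
noncomputable def ang (q a b : ℂ) : ℝ := arg ((b - q) / (a - q))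

/-- The angle swept by the path `a — p — b`, seen from `q`. -/
noncomputable def sweep (q a p b : ℂ) : ℝ := ang q a p + ang q p b

lemma div_mem_slitPlane {q a b : ℂ} (h : q ∉ segment ℝ a b) :
    (b - q) / (a - q) ∈ slitPlane := by
  have haq : a - q ≠ 0 := by
    intro h0
    exact h (sub_eq_zero.1 h0 ▸ left_mem_segment ℝ a b)
  by_contra hn
  rw [mem_slitPlane_iff] at hn
  push Not at hn
  obtain ⟨h1, h2⟩ := hn
  set r := ((b - q) / (a - q)).re with hr
  have e : (b - q) / (a - q) = (r : ℂ) := by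
    apply Complex.ext <;> simp [hr, h2]
  rw [div_eq_iff haq] at e
  apply h
  -- `b - q = r (a - q)` with `r ≤ 0`, so `q = (-r / (1 - r)) a + (1 / (1 - r)) b`.
  have h1r : (0 : ℝ) < 1 - r := by linarith
  refine ⟨-r / (1 - r), 1 / (1 - r), div_nonneg (by linarith) h1r.le,
    div_nonneg zero_le_one h1r.le, ?_, ?_⟩
  · field_simp; ring
  · have hc : (1 - (r : ℂ)) ≠ 0 := by exact_mod_cast h1r.ne'
    simp only [real_smul]
    push_cast
    field_simp
    linear_combination e

lemma ang_symm {q a b : ℂ} (h : q ∉ segment ℝ a b) : ang q b a = - ang q a b := by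
  have := div_mem_slitPlane h
  unfold ang
  rw [← inv_div, arg_inv, if_neg (slitPlane_arg_ne_pi this)]

lemma arg_div_of_re_pos {z w : ℂ} (hz : 0 < z.re) (hw : 0 < w.re) :
    arg (z / w) = arg z - arg w := by
  have hz0 : z ≠ 0 := by rintro rfl; simp at hz
  have hw0 : w ≠ 0 := by rintro rfl; simp at hw
  have h1 := (abs_lt.1 (abs_arg_lt_pi_div_two_iff.2 (Or.inl hz)))
  have h2 := (abs_lt.1 (abs_arg_lt_pi_div_two_iff.2 (Or.inl hw)))
  have hwa : arg w⁻¹ = - arg w := by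
    rw [arg_inv, if_neg (by linarith [Real.pi_pos])]
  rw [div_eq_mul_inv, arg_mul hz0 (inv_ne_zero hw0), hwa]
  · ring
  · rw [hwa]
    constructor <;> linarith [h1.1, h1.2, h2.1, h2.2]

/-! ### Disjoint paths -/

/-- The direction from a point of `[a, b]` to a point of the disjoint segment `[c, d]` has zero
total turning along the boundary of the parameter square: all these directions lie in one open
half-plane, on which a rotated `arg` is a continuous branch of the angle. -/
lemma square {a b c d : ℂ} (h : Disjoint (segment ℝ a b) (segment ℝ c d)) :
    ang a c d + ang d a b + ang b d c + ang c b a = 0 := by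
  have hcomp : ∀ x y : ℂ, IsCompact (segment ℝ x y) := by
    intro x y
    rw [← convexHull_pair (𝕜 := ℝ)]
    exact (Set.toFinite _).isCompact_convexHull (𝕜 := ℝ)
  obtain ⟨f, s, t, hs, hst, ht⟩ := geometric_hahn_banach_compact_closed (convex_segment a b)
    (hcomp a b) (convex_segment c d) (hcomp c d).isClosed h
  set w : ℂ := ⟨f 1, - f I⟩ with hw
  have hf : ∀ z : ℂ, (z * w).re = f z := by
    intro z
    have : z = z.re • (1 : ℂ) + z.im • I := by simp
    conv_rhs => rw [this]
    rw [map_add, map_smul, map_smul]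
    simp [hw, mul_re]
  have hpos : ∀ x ∈ segment ℝ a b, ∀ y ∈ segment ℝ c d, 0 < ((y - x) * w).re := by
    intro x hx y hy
    rw [hf, map_sub]
    linarith [hs x hx, ht y hy]
  have hw0 : w ≠ 0 := by
    intro h0
    have := hpos _ (left_mem_segment ℝ a b) _ (left_mem_segment ℝ c d)
    simp [h0] at this
  have key : ∀ x ∈ segment ℝ a b, ∀ y ∈ segment ℝ c d, ∀ x' ∈ segment ℝ a b,
      ∀ y' ∈ segment ℝ c d,
      arg ((y - x) / (y' - x')) = arg ((y - x) * w) - arg ((y' - x') * w) := by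
    intro x hx y hy x' hx' y' hy'
    rw [← arg_div_of_re_pos (hpos x hx y hy) (hpos x' hx' y' hy'), mul_div_mul_right _ _ hw0]
  have neg : ∀ x y z : ℂ, (x - y) / (z - y) = (y - x) / (y - z) := by
    intro x y z
    rw [← neg_sub y x, ← neg_sub y z, neg_div_neg_eq]
  have la := left_mem_segment ℝ a b
  have lb := right_mem_segment ℝ a b
  have lc := left_mem_segment ℝ c d
  have ld := right_mem_segment ℝ c d
  unfold ang
  rw [neg b d a, neg a c b, key a la d ld a la c lc, key b lb d ld a la d ld,
    key b lb c lc b lb d ld, key a la c lc b lb c lc]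
  ring

/-- The square relation for two-segment paths `a — p — b` and `c — r — d`: the four squares of
their pieces, glued along the common sides. -/
lemma sweep_square {a p b c r d : ℂ} (h1 : Disjoint (segment ℝ a p) (segment ℝ c r))
    (h2 : Disjoint (segment ℝ a p) (segment ℝ d r))
    (h3 : Disjoint (segment ℝ b p) (segment ℝ c r))
    (h4 : Disjoint (segment ℝ b p) (segment ℝ d r)) :
    sweep a c r d + sweep d a p b - sweep b c r d - sweep c a p b = 0 := by
  rw [segment_symm ℝ b p] at h3 h4
  rw [segment_symm ℝ d r] at h2 h4
  have R : ∀ {x y u v : ℂ}, Disjoint (segment ℝ x y) (segment ℝ u v) → u ∉ segment ℝ x y ∧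
      v ∉ segment ℝ x y ∧ x ∉ segment ℝ u v ∧ y ∉ segment ℝ u v := by
    intro x y u v h
    refine ⟨fun hu => ?_, fun hu => ?_, fun hu => ?_, fun hu => ?_⟩
    · exact Set.disjoint_left.1 h hu (left_mem_segment ℝ u v)
    · exact Set.disjoint_left.1 h hu (right_mem_segment ℝ u v)
    · exact Set.disjoint_left.1 h (left_mem_segment ℝ x y) hu
    · exact Set.disjoint_left.1 h (right_mem_segment ℝ x y) hu
  obtain ⟨a1, a2, a3, a4⟩ := R h1
  obtain ⟨b1, b2, b3, b4⟩ := R h2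
  obtain ⟨c1, c2, c3, c4⟩ := R h3
  obtain ⟨d1, d2, d3, d4⟩ := R h4
  have s1 := square h1
  have s2 := square h2
  have s3 := square h3
  have s4 := square h4
  unfold sweep
  rw [ang_symm a1, ang_symm a4] at s1
  rw [ang_symm b1, ang_symm b4] at s2
  rw [ang_symm c1, ang_symm c4] at s3
  rw [ang_symm d1, ang_symm d4] at s4
  linarith

/-! ### Swept angles modulo `2π` -/

lemma ang_int {q a b : ℂ} (ha : a ≠ q) (hb : b ≠ q) :
    ∃ n : ℤ, ang q a b = arg (b - q) - arg (a - q) + 2 * Real.pi * n := by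
  have h := arg_div_coe_angle (sub_ne_zero.2 hb) (sub_ne_zero.2 ha)
  rw [← Real.Angle.coe_sub, Real.Angle.angle_eq_iff_two_pi_dvd_sub] at h
  obtain ⟨n, hn⟩ := h
  exact ⟨n, by unfold ang; linarith⟩

lemma sweep_int {q a p b : ℂ} (ha : a ≠ q) (hp : p ≠ q) (hb : b ≠ q) :
    ∃ n : ℤ, sweep q a p b = arg (b - q) - arg (a - q) + 2 * Real.pi * n := by
  obtain ⟨m, hm⟩ := ang_int ha hp
  obtain ⟨n, hn⟩ := ang_int hp hb
  refine ⟨m + n, ?_⟩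
  unfold sweep
  rw [hm, hn]
  push_cast
  ring

lemma arg_neg_int {a b : ℂ} (h : a ≠ b) :
    ∃ n : ℤ, arg (a - b) = arg (b - a) + Real.pi + 2 * Real.pi * n := by
  have h := arg_neg_coe_angle (sub_ne_zero.2 h.symm)
  rw [neg_sub, ← Real.Angle.coe_add, Real.Angle.angle_eq_iff_two_pi_dvd_sub] at h
  obtain ⟨n, hn⟩ := h
  exact ⟨n, by linarith⟩

/-! ### Winding number zero on unbounded connected sets -/

lemma ang_continuousAt {z a b : ℂ} (h : z ∉ segment ℝ a b) :
    ContinuousAt (fun z => ang z a b) z := by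
  have haz : a - z ≠ 0 := by
    intro h0
    exact h (sub_eq_zero.1 h0 ▸ left_mem_segment ℝ a b)
  unfold ang
  refine ContinuousAt.comp (f := fun z => (b - z) / (a - z)) (g := arg)
    (continuousAt_arg (div_mem_slitPlane h)) ?_
  exact ContinuousAt.div (by fun_prop) (by fun_prop) haz

lemma ang_tendsto (a b : ℂ) :
    Tendsto (fun z => ang z a b) (Bornology.cobounded ℂ) (𝓝 0) := by
  have h1 : Tendsto (fun z : ℂ => a - z) (Bornology.cobounded ℂ) (Bornology.cobounded ℂ) :=
    tendsto_const_sub_cobounded a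
  have h2 : Tendsto (fun z : ℂ => 1 + (b - a) * (a - z)⁻¹) (Bornology.cobounded ℂ) (𝓝 1) := by
    simpa using tendsto_const_nhds.add
      ((tendsto_inv₀_cobounded.comp h1).const_mul (b - a))
  have h3 : Tendsto (fun z : ℂ => (b - z) / (a - z)) (Bornology.cobounded ℂ) (𝓝 1) := by
    refine h2.congr' ?_
    have : ∀ᶠ z : ℂ in Bornology.cobounded ℂ, z ≠ a := by
      exact Bornology.isBounded_def.1 (Bornology.isBounded_singleton (x := a))
    filter_upwards [this] with z hz
    have : a - z ≠ 0 := sub_ne_zero.2 hz.symm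
    field_simp
    ring
  have h4 := (continuousAt_arg (x := 1) (by simp)).tendsto.comp h3
  simpa [ang, Function.comp_def] using h4

/-- A closed polygonal path `a — p — b — r — c — s — a` has winding number zero around each point
of an unbounded connected set that it does not meet. -/
lemma hexagon_eq_zero {a p b r c s : ℂ} {S : Set ℂ} (hS : IsPreconnected S)
    (hb : ¬ Bornology.IsBounded S)
    (h1 : Disjoint S (segment ℝ a p)) (h2 : Disjoint S (segment ℝ b p))
    (h3 : Disjoint S (segment ℝ b r)) (h4 : Disjoint S (segment ℝ c r))
    (h5 : Disjoint S (segment ℝ a s)) (h6 : Disjoint S (segment ℝ c s))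
    {z : ℂ} (hz : z ∈ S) :
    sweep z a p b + sweep z b r c - sweep z a s c = 0 := by
  rw [segment_symm ℝ b p] at h2
  rw [segment_symm ℝ c r] at h4
  rw [segment_symm ℝ c s] at h6
  rw [Set.disjoint_left] at h1 h2 h3 h4 h5 h6
  set H : ℂ → ℝ := fun z => sweep z a p b + sweep z b r c - sweep z a s c with hH
  have hcont : ContinuousOn H S := by
    intro x hx
    apply ContinuousAt.continuousWithinAt
    exact (((ang_continuousAt (h1 hx)).add (ang_continuousAt (h2 hx))).add
      ((ang_continuousAt (h3 hx)).add (ang_continuousAt (h4 hx)))).sub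
      ((ang_continuousAt (h5 hx)).add (ang_continuousAt (h6 hx)))
  have hint : ∀ x ∈ S, ∃ n : ℤ, H x = 2 * Real.pi * n := by
    intro x hx
    have ne1 : ∀ {u v : ℂ}, x ∉ segment ℝ u v → u ≠ x ∧ v ≠ x := by
      intro u v h
      exact ⟨fun e => h (e ▸ left_mem_segment ℝ u v), fun e => h (e ▸ right_mem_segment ℝ u v)⟩
    obtain ⟨l, hl⟩ := sweep_int (ne1 (h1 hx)).1 (ne1 (h1 hx)).2 (ne1 (h2 hx)).2
    obtain ⟨m, hm⟩ := sweep_int (ne1 (h3 hx)).1 (ne1 (h3 hx)).2 (ne1 (h4 hx)).2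
    obtain ⟨n, hn⟩ := sweep_int (ne1 (h5 hx)).1 (ne1 (h5 hx)).2 (ne1 (h6 hx)).2
    refine ⟨l + m - n, ?_⟩
    simp only [hH]
    rw [hl, hm, hn]
    push_cast
    ring
  have hlim : Tendsto H (Bornology.cobounded ℂ) (𝓝 0) := by
    simpa [hH, sweep] using (((ang_tendsto a p).add (ang_tendsto p b)).add
      ((ang_tendsto b r).add (ang_tendsto r c))).sub
      ((ang_tendsto a s).add (ang_tendsto s c))
  have hfreq : ∃ᶠ x in Bornology.cobounded ℂ, x ∈ S := by
    intro h
    exact hb (Bornology.isBounded_def.2 h)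
  have hsmall : ∀ᶠ x in Bornology.cobounded ℂ, |H x| < 2 * Real.pi := by
    have := hlim.abs
    rw [abs_zero] at this
    exact this.eventually_lt_const (by positivity)
  obtain ⟨y, hyS, hy⟩ := (hfreq.and_eventually hsmall).exists
  have hpi := Real.pi_pos
  have hy0 : H y = 0 := by
    obtain ⟨n, hn⟩ := hint y hyS
    rw [hn, abs_mul, abs_of_pos (by positivity)] at hy
    have : |(n : ℝ)| < 1 := by
      by_contra hge
      push Not at hge
      nlinarith
    have : n = 0 := by
      have h' : |n| < 1 := by exact_mod_cast this
      exact Int.abs_lt_one_iff.1 h'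
    simp [hn, this]
  have hord : (H '' S).OrdConnected := (hS.image H hcont).ordConnected
  -- a value `2πn` with `n ≠ 0` would force one of the values `± π`
  have hno : ∀ x ∈ S, H x ≠ Real.pi ∧ H x ≠ -Real.pi := by
    intro x hx
    obtain ⟨n, hn⟩ := hint x hx
    rw [hn]
    constructor
    · intro h
      have : (2 * (n : ℝ) - 1) = 0 := by
        apply mul_left_cancel₀ hpi.ne'; linarith
      have : 2 * n - 1 = 0 := by exact_mod_cast this
      omega
    · intro h
      have : (2 * (n : ℝ) + 1) = 0 := by
        apply mul_left_cancel₀ hpi.ne'; linarith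
      have : 2 * n + 1 = 0 := by exact_mod_cast this
      omega
  change H z = 0
  obtain ⟨n, hn⟩ := hint z hz
  rcases lt_trichotomy n 0 with h | h | h
  · exfalso
    have hn' : (n : ℝ) ≤ -1 := by exact_mod_cast (by omega : n ≤ -1)
    obtain ⟨x, hx, hxe⟩ := hord.out ⟨z, hz, rfl⟩ ⟨y, hyS, rfl⟩
      (show -Real.pi ∈ Set.Icc (H z) (H y) from ⟨by rw [hn]; nlinarith, by rw [hy0]; linarith⟩)
    exact (hno x hx).2 hxe
  · simp [hn, h]
  · exfalso
    have hn' : (1 : ℝ) ≤ n := by exact_mod_cast (by omega : 1 ≤ n)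
    obtain ⟨x, hx, hxe⟩ := hord.out ⟨y, hyS, rfl⟩ ⟨z, hz, rfl⟩
      (show Real.pi ∈ Set.Icc (H y) (H z) from ⟨by rw [hy0]; linarith, by rw [hn]; nlinarith⟩)
    exact (hno x hx).1 hxe

/-! ### The parity argument -/

/-- `K₅` cannot be drawn without intersections of independent edges, where the edges among the
vertices `0, 1, 2, 3` are the paths `v i — p i j — v j`, and an edge from `i` to infinity is
replaced by an unbounded connected set `S i` containing `v i`. -/
lemma core (v : Fin 4 → ℂ) (p : Fin 4 → Fin 4 → ℂ) (S : Fin 4 → Set ℂ)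
    (hp : ∀ i j, p i j = p j i)
    (hS : ∀ i, IsPreconnected (S i)) (hb : ∀ i, ¬ Bornology.IsBounded (S i))
    (hv : ∀ i, v i ∈ S i)
    (hSd : ∀ i j k, i ≠ j → i ≠ k → j ≠ k → Disjoint (S i) (segment ℝ (v j) (p j k)))
    (hd : ∀ i j k l, i ≠ j → i ≠ k → i ≠ l → j ≠ k → j ≠ l → k ≠ l →
      Disjoint (segment ℝ (v i) (p i j)) (segment ℝ (v k) (p k l))) : False := by
  have hvv : ∀ i j k, i ≠ j → i ≠ k → j ≠ k → v j ≠ v i := by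
    intro i j k h1 h2 h3 e
    exact Set.disjoint_left.1 (hSd i j k h1 h2 h3) (hv i) (e ▸ left_mem_segment ℝ _ _)
  have hpv : ∀ i j k, i ≠ j → i ≠ k → j ≠ k → p j k ≠ v i := by
    intro i j k h1 h2 h3 e
    exact Set.disjoint_left.1 (hSd i j k h1 h2 h3) (hv i) (e ▸ right_mem_segment ℝ _ _)
  have hex : ∀ i j k l, i ≠ j → i ≠ k → i ≠ l → j ≠ k → j ≠ l → k ≠ l →
      sweep (v i) (v j) (p j k) (v k) + sweep (v i) (v k) (p k l) (v l)
        - sweep (v i) (v j) (p j l) (v l) = 0 := by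
    intro i j k l h1 h2 h3 h4 h5 h6
    refine hexagon_eq_zero (hS i) (hb i) (hSd i j k h1 h2 h4) ?_ (hSd i k l h2 h3 h6) ?_
      (hSd i j l h1 h3 h5) ?_ (hv i)
    · rw [hp j k]; exact hSd i k j h2 h1 h4.symm
    · rw [hp k l]; exact hSd i l k h3 h2 h6.symm
    · rw [hp j l]; exact hSd i l j h3 h1 h5.symm
  have hsq : ∀ i j k l, i ≠ j → i ≠ k → i ≠ l → j ≠ k → j ≠ l → k ≠ l →
      sweep (v i) (v k) (p k l) (v l) + sweep (v l) (v i) (p i j) (v j)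
        - sweep (v j) (v k) (p k l) (v l) - sweep (v k) (v i) (p i j) (v j) = 0 := by
    intro i j k l h1 h2 h3 h4 h5 h6
    refine sweep_square (hd i j k l h1 h2 h3 h4 h5 h6) ?_ ?_ ?_
    · rw [hp k l]; exact hd i j l k h1 h3 h2 h5 h4 h6.symm
    · rw [hp i j]; exact hd j i k l h1.symm h4 h5 h2 h3 h6
    · rw [hp i j, hp k l]; exact hd j i l k h1.symm h5 h4 h3 h2 h6.symm
  have hn : ∀ i j k, ∃ n : ℤ, i ≠ j → i ≠ k → j ≠ k →
      sweep (v i) (v j) (p j k) (v k) = arg (v k - v i) - arg (v j - v i) + 2 * Real.pi * n := by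
    intro i j k
    by_cases h : i ≠ j ∧ i ≠ k ∧ j ≠ k
    · obtain ⟨h1, h2, h3⟩ := h
      obtain ⟨n, hn⟩ := sweep_int (hvv i j k h1 h2 h3) (hpv i j k h1 h2 h3)
        (hvv i k j h2 h1 h3.symm)
      exact ⟨n, fun _ _ _ => hn⟩
    · exact ⟨0, fun h1 h2 h3 => absurd ⟨h1, h2, h3⟩ h⟩
  choose n hn using hn
  obtain ⟨m01, e01⟩ := arg_neg_int (hvv 1 0 2 (by decide) (by decide) (by decide))
  obtain ⟨m02, e02⟩ := arg_neg_int (hvv 2 0 1 (by decide) (by decide) (by decide))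
  obtain ⟨m03, e03⟩ := arg_neg_int (hvv 3 0 1 (by decide) (by decide) (by decide))
  obtain ⟨m12, e12⟩ := arg_neg_int (hvv 2 1 0 (by decide) (by decide) (by decide))
  obtain ⟨m13, e13⟩ := arg_neg_int (hvv 3 1 0 (by decide) (by decide) (by decide))
  obtain ⟨m23, e23⟩ := arg_neg_int (hvv 3 2 0 (by decide) (by decide) (by decide))
  have canc : ∀ t : ℤ, Real.pi * (t : ℝ) = 0 → t = 0 := by
    intro t ht
    have := (mul_eq_zero.1 ht).resolve_left Real.pi_ne_zero
    exact_mod_cast this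
  have w : ∀ i j k l, i ≠ j → i ≠ k → i ≠ l → j ≠ k → j ≠ l → k ≠ l →
      2 * (n i j k + n i k l - n i j l) = 0 := by
    intro i j k l h1 h2 h3 h4 h5 h6
    have := hex i j k l h1 h2 h3 h4 h5 h6
    rw [hn i j k h1 h2 h4, hn i k l h2 h3 h6, hn i j l h1 h3 h5] at this
    apply canc
    push_cast
    linarith
  have w0 := w 0 1 2 3 (by decide) (by decide) (by decide) (by decide) (by decide) (by decide)
  have w1 := w 1 0 2 3 (by decide) (by decide) (by decide) (by decide) (by decide) (by decide)
  have w2 := w 2 0 1 3 (by decide) (by decide) (by decide) (by decide) (by decide) (by decide)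
  have w3 := w 3 0 1 2 (by decide) (by decide) (by decide) (by decide) (by decide) (by decide)
  have s : ∀ i j k l, i ≠ j → i ≠ k → i ≠ l → j ≠ k → j ≠ l → k ≠ l →
      (arg (v l - v i) - arg (v k - v i) + 2 * Real.pi * n i k l)
      + (arg (v j - v l) - arg (v i - v l) + 2 * Real.pi * n l i j)
      - (arg (v l - v j) - arg (v k - v j) + 2 * Real.pi * n j k l)
      - (arg (v j - v k) - arg (v i - v k) + 2 * Real.pi * n k i j) = 0 := by
    intro i j k l h1 h2 h3 h4 h5 h6
    rw [← hn i k l h2 h3 h6, ← hn l i j h3.symm h5.symm h1, ← hn j k l h4 h5 h6,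
      ← hn k i j h2.symm h4.symm h1]
    exact hsq i j k l h1 h2 h3 h4 h5 h6
  have s1 := s 0 1 2 3 (by decide) (by decide) (by decide) (by decide) (by decide) (by decide)
  have s2 := s 0 2 1 3 (by decide) (by decide) (by decide) (by decide) (by decide) (by decide)
  have s3 := s 0 3 1 2 (by decide) (by decide) (by decide) (by decide) (by decide) (by decide)
  rw [e01, e02, e03, e12, e13, e23] at *
  have t1 : 2 * (n 0 2 3 + n 3 0 1 - n 1 2 3 - n 2 0 1) + 2 * (-m03 + m13 - m12 + m02) = 0 := by
    apply canc
    push_cast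
    linarith
  have t2 : 2 * (n 0 1 3 + n 3 0 2 - n 2 1 3 - n 1 0 2)
      + 2 * (-m03 + m23 + m12 + m01) + 2 = 0 := by
    apply canc
    push_cast
    linarith
  have t3 : 2 * (n 0 1 2 + n 2 0 3 - n 3 1 2 - n 1 0 3)
      + 2 * (-m02 - m23 + m13 + m01) = 0 := by
    apply canc
    push_cast
    linarith
  omega

/-! ### Convex bodies -/

theorem stmt13 (K : Fin 4 → Set (Fin 2 → ℝ))
    (hKcomp : ∀ i, IsCompact (K i)) (hKconv : ∀ i, Convex ℝ (K i))
    (hKint : ∀ i, (interior (K i)).Nonempty)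
    (htouch : ∀ i j : Fin 4, i ≠ j →
      (K i ∩ K j).Nonempty ∧ interior (K i) ∩ interior (K j) = ∅)
    (hquad : K 0 ∩ K 1 ∩ K 2 ∩ K 3 = ∅) :
    ∃ i : Fin 4, ∃ x ∈ (⋃ j ∈ ({j | j ≠ i} : Set (Fin 4)), K j)ᶜ,
      Bornology.IsBounded
        (connectedComponentIn (⋃ j ∈ ({j | j ≠ i} : Set (Fin 4)), K j)ᶜ x) ∧
      K i ⊆ closure
        (connectedComponentIn (⋃ j ∈ ({j | j ≠ i} : Set (Fin 4)), K j)ᶜ x) := by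
  set U : Fin 4 → Set (Fin 2 → ℝ) := fun i => (⋃ j ∈ ({j | j ≠ i} : Set (Fin 4)), K j)ᶜ with hU
  have hcl : ∀ i, closure (interior (K i)) = K i := fun i => by
    rw [(hKconv i).closure_interior_eq_closure_of_nonempty_interior (hKint i),
      (hKcomp i).isClosed.closure_eq]
  have hdis : ∀ i j, i ≠ j → Disjoint (interior (K i)) (K j) := by
    intro i j hij
    rw [← hcl j]
    exact (Set.disjoint_iff_inter_eq_empty.2 (htouch i j hij).2).closure_right isOpen_interior
  have hsub : ∀ i, interior (K i) ⊆ U i := by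
    intro i x hx hx'
    simp only [Set.mem_iUnion] at hx'
    obtain ⟨j, hj, hxj⟩ := hx'
    exact Set.disjoint_left.1 (hdis i j (Ne.symm hj)) hx hxj
  choose v hv using hKint
  by_contra hcon
  push Not at hcon
  have hunb : ∀ i, ¬ Bornology.IsBounded (connectedComponentIn (U i) (v i)) := by
    intro i hbd
    refine hcon i (v i) (hsub i (hv i)) hbd ?_
    calc K i = closure (interior (K i)) := (hcl i).symm
      _ ⊆ _ := closure_mono
        ((hKconv i).interior.isPreconnected.subset_connectedComponentIn (hv i) (hsub i))
  have hpt : ∀ i j, ∃ x, i ≠ j → x ∈ K i ∩ K j := by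
    intro i j
    by_cases h : i = j
    · exact ⟨0, fun h' => absurd h h'⟩
    · obtain ⟨x, hx⟩ := (htouch i j h).1
      exact ⟨x, fun _ => hx⟩
  choose p₀ hp₀ using hpt
  set p : Fin 4 → Fin 4 → (Fin 2 → ℝ) := fun i j => p₀ (min i j) (max i j) with hpdef
  have hpsymm : ∀ i j, p i j = p j i := by
    intro i j
    simp only [hpdef, min_comm, max_comm]
  have hpm : ∀ i j, i ≠ j → p i j ∈ K i ∩ K j := by
    intro i j hij
    rcases lt_or_gt_of_ne hij with h | h
    · simp only [hpdef, min_eq_left h.le, max_eq_right h.le]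
      exact hp₀ i j hij
    · simp only [hpdef, min_eq_right h.le, max_eq_left h.le]
      exact (hp₀ j i hij.symm).symm
  have hseg : ∀ i j, i ≠ j → segment ℝ (v i) (p i j) ⊆ K i := fun i j hij =>
    (hKconv i).segment_subset (interior_subset (hv i)) (hpm i j hij).1
  -- apart from `p i j`, the segment from `v i` to `p i j` lies in the interior of `K i`
  have hend : ∀ i j k x, i ≠ j → i ≠ k → x ∈ segment ℝ (v i) (p i j) → x ∈ K k → x = p i j := by
    intro i j k x hij hik hx hxk
    rw [← insert_endpoints_openSegment] at hx
    rcases hx with hx | hx | hx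
    · exact absurd hxk (Set.disjoint_left.1 (hdis i k hik) (hx ▸ hv i))
    · exact hx
    · exact absurd hxk (Set.disjoint_left.1 (hdis i k hik)
        ((hKconv i).openSegment_interior_self_subset_interior (hv i) (hpm i j hij).1 hx))
  let L : (Fin 2 → ℝ) ≃L[ℝ] ℂ := basisOneI.equivFun.symm.toContinuousLinearEquiv
  have hLseg : ∀ a b, segment ℝ (L a) (L b) = L '' segment ℝ a b := fun a b =>
    (image_segment ℝ (L : (Fin 2 → ℝ) →ₗ[ℝ] ℂ).toAffineMap a b).symm
  refine core (fun i => L (v i)) (fun i j => L (p i j))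
    (fun i => L '' connectedComponentIn (U i) (v i)) (fun i j => by rw [hpsymm]) (fun i => ?_)
    (fun i hbd => ?_) (fun i => ?_) (fun i j k hij hik hjk => ?_)
    (fun i j k l hij hik hil hjk hjl hkl => ?_)
  · exact isPreconnected_connectedComponentIn.image _ L.continuous.continuousOn
  · refine hunb i ?_
    have := L.symm.lipschitz.isBounded_image hbd
    rwa [Set.image_image, show (fun x => L.symm (L x)) = id from
      funext fun x => L.symm_apply_apply x, Set.image_id] at this
  · exact ⟨v i, mem_connectedComponentIn (hsub i (hv i)), rfl⟩
  · rw [hLseg, Set.disjoint_image_iff L.injective, Set.disjoint_left]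
    intro x hx hx'
    refine connectedComponentIn_subset _ _ hx ?_
    simp only [Set.mem_iUnion]
    exact ⟨j, hij.symm, hseg j k hjk hx'⟩
  · rw [hLseg, hLseg, Set.disjoint_image_iff L.injective, Set.disjoint_left]
    intro x hx hx'
    have e1 := hend i j k x hij hik hx (hseg k l hkl hx')
    have e2 := hend k l i x hkl hik.symm hx' (hseg i j hij hx)
    have hall : ∀ t, t = i ∨ t = j ∨ t = k ∨ t = l → x ∈ K t := by
      rintro t (rfl | rfl | rfl | rfl)
      · exact e1 ▸ (hpm _ _ hij).1
      · exact e1 ▸ (hpm _ _ hij).2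
      · exact e2 ▸ (hpm _ _ hkl).1
      · exact e2 ▸ (hpm _ _ hkl).2
    have hmem : ∀ t, x ∈ K t := fun t => hall t (by omega)
    have : x ∈ K 0 ∩ K 1 ∩ K 2 ∩ K 3 := ⟨⟨⟨hmem 0, hmem 1⟩, hmem 2⟩, hmem 3⟩
    rw [hquad] at this
    exact this
end

section
/- Let K be a convex body in ℝ² (a compact convex set with nonempty interior). Then there exist translation vectors t_1, t_2, t_3 ∈ ℝ² such that the three translates K + t_1, K + t_2, K + t_3 pairwise touch: for all i ≠ j, (K + t_i) ∩ (K + t_j) ≠ ∅ and interior(K + t_i) ∩ interior(K + t_j) = ∅. -/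
/-!
Let `C = K - K`, a compact, convex, symmetric neighbourhood of the origin, so that its gauge is a
norm with closed unit ball `C`. The translates `x + K` and `y + K` meet when `x - y ∈ C`, and their
interiors are disjoint when `x - y ∉ interior C`; hence they touch as soon as `x - y` has gauge `1`
(`touch_of_gauge_eq_one`). It remains to find an equilateral triangle of side `1` in this norm
(`exists_unit_triangle`). Fix a unit vector `p` and move a unit vector `q` from `p` to `-p` along
the unit circle: the distance from `q` to `p` goes continuously from `0` to `2`, so it equals `1`
for some `q`, and then `0`, `p`, `q` is such a triangle.
-/

open Pointwise

theorem isCompact_sub_self {K : Set (Fin 2 → ℝ)} (hK : IsCompact K) : IsCompact (K - K) := by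
  rw [sub_eq_add_neg]
  exact hK.add hK.neg

theorem interior_sub_subset (K : Set (Fin 2 → ℝ)) :
    interior K - interior K ⊆ interior (K - K) :=
  interior_maximal (Set.sub_subset_sub interior_subset interior_subset)
    isOpen_interior.sub_right

theorem zero_mem_interior_sub_self {K : Set (Fin 2 → ℝ)} (hKint : (interior K).Nonempty) :
    (0 : Fin 2 → ℝ) ∈ interior (K - K) := by
  obtain ⟨x, hx⟩ := hKint
  exact interior_sub_subset K ⟨x, hx, x, hx, sub_self x⟩

theorem touch_of_gauge_eq_one {K : Set (Fin 2 → ℝ)}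
    (hKcomp : IsCompact K) (hKconv : Convex ℝ K) (hKint : (interior K).Nonempty)
    {x y : Fin 2 → ℝ} (h : gauge (K - K) (x - y) = 1) :
    ((x +ᵥ K) ∩ (y +ᵥ K)).Nonempty ∧ interior (x +ᵥ K) ∩ interior (y +ᵥ K) = ∅ := by
  have hconv : Convex ℝ (K - K) := hKconv.sub hKconv
  have hcl : IsClosed (K - K) := (isCompact_sub_self hKcomp).isClosed
  have hnhds : K - K ∈ nhds (0 : Fin 2 → ℝ) :=
    mem_interior_iff_mem_nhds.1 (zero_mem_interior_sub_self hKint)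
  constructor
  · have hm : x - y ∈ K - K := by
      rw [← hcl.closure_eq]
      exact (gauge_le_one_iff_mem_closure hconv hnhds).1 h.le
    obtain ⟨a, ha, b, hb, hab⟩ := hm
    refine ⟨x + b, ⟨b, hb, rfl⟩, ⟨a, ha, ?_⟩⟩
    change y + a = x + b
    have hab' : a - b = x - y := hab
    rw [sub_eq_sub_iff_add_eq_add] at hab'
    rw [add_comm, hab']
  · rw [Set.eq_empty_iff_forall_notMem]
    rintro z ⟨hx, hy⟩
    rw [interior_vadd] at hx hy
    obtain ⟨a, ha, rfl⟩ := hx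
    obtain ⟨b, hb, hab⟩ := hy
    have hab' : y + b = x + a := hab
    have hm : x - y ∈ interior (K - K) := by
      refine interior_sub_subset K ⟨b, hb, a, ha, ?_⟩
      change b - a = x - y
      rw [sub_eq_sub_iff_add_eq_add, ← hab', add_comm]
    exact ((gauge_lt_one_iff_mem_interior hconv hnhds).2 hm).ne h

/-- The intermediate value argument: in the norm given by the gauge of a bounded symmetric convex
neighbourhood of the origin, some two unit vectors are at distance `1`. -/
theorem exists_unit_triangle {C : Set (Fin 2 → ℝ)} (hconv : Convex ℝ C)
    (hnhds : C ∈ nhds (0 : Fin 2 → ℝ)) (hbdd : Bornology.IsBounded C)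
    (hsymm : ∀ x ∈ C, -x ∈ C) :
    ∃ p q : Fin 2 → ℝ, gauge C p = 1 ∧ gauge C q = 1 ∧ gauge C (q - p) = 1 := by
  have hg : Continuous (gauge C) := continuous_gauge hconv hnhds
  have hpos : ∀ v : Fin 2 → ℝ, v ≠ 0 → 0 < gauge C v := fun v hv =>
    (gauge_pos (absorbent_nhds_zero hnhds) (NormedSpace.isVonNBounded_of_isBounded ℝ hbdd)).2 hv
  -- An arc that avoids the origin and joins two opposite vectors.
  let γ : ℝ → Fin 2 → ℝ := fun s => ![s, 1 - s ^ 2]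
  have hγ : ∀ s, γ s ≠ 0 := by
    intro s hs
    have h0 : s = 0 := congrFun hs 0
    have h1 : 1 - s ^ 2 = 0 := congrFun hs 1
    simp [h0] at h1
  have hγc : Continuous γ := by
    refine continuous_pi fun i => ?_
    fin_cases i
    · exact continuous_id
    · exact continuous_const.sub (continuous_id.pow 2)
  let u : ℝ → Fin 2 → ℝ := fun s => (gauge C (γ s))⁻¹ • γ s
  have hu : ∀ s, gauge C (u s) = 1 := by
    intro s
    have h := hpos _ (hγ s)
    rw [gauge_smul_of_nonneg (inv_nonneg.2 h.le), smul_eq_mul, inv_mul_cancel₀ h.ne']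
  have huc : Continuous u :=
    ((hg.comp hγc).inv₀ fun s => (hpos _ (hγ s)).ne').smul hγc
  have hend : u (-1) = -u 1 := by
    have h : γ (-1) = -γ 1 := by
      ext i
      fin_cases i <;> simp [γ]
    simp only [u, h, gauge_neg hsymm, smul_neg]
  have hfc : Continuous fun s => gauge C (u s - u (-1)) := hg.comp (huc.sub continuous_const)
  have h2 : gauge C (u 1 - u (-1)) = 2 := by
    rw [hend, sub_neg_eq_add, ← two_smul ℝ, gauge_smul_of_nonneg zero_le_two, hu, smul_eq_mul,
      mul_one]
  obtain ⟨s, -, hs⟩ := intermediate_value_Icc (by norm_num : (-1 : ℝ) ≤ 1) hfc.continuousOn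
    (show (1 : ℝ) ∈ Set.Icc _ _ by simp only [sub_self, gauge_zero, h2]; norm_num)
  exact ⟨u (-1), u s, hu _, hu _, hs⟩

/-- Every planar convex body has three pairwise touching translates. -/
theorem stmt14 (K : Set (Fin 2 → ℝ))
    (hKcomp : IsCompact K) (hKconv : Convex ℝ K)
    (hKint : (interior K).Nonempty) :
    ∃ t : Fin 3 → (Fin 2 → ℝ),
      ∀ i j : Fin 3, i ≠ j →
        ((t i +ᵥ K) ∩ (t j +ᵥ K)).Nonempty ∧
        interior (t i +ᵥ K) ∩ interior (t j +ᵥ K) = ∅ := by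
  have hsymm : ∀ x ∈ K - K, -x ∈ K - K := by
    rintro _ ⟨a, ha, b, hb, rfl⟩
    exact ⟨b, hb, a, ha, (neg_sub a b).symm⟩
  obtain ⟨p, q, hp, hq, hqp⟩ := exists_unit_triangle (hKconv.sub hKconv)
    (mem_interior_iff_mem_nhds.1 (zero_mem_interior_sub_self hKint))
    (isCompact_sub_self hKcomp).isBounded hsymm
  have hpq : gauge (K - K) (p - q) = 1 := by
    rw [← neg_sub q p, gauge_neg hsymm, hqp]
  refine ⟨![0, p, q], fun i j hij => touch_of_gauge_eq_one hKcomp hKconv hKint ?_⟩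
  fin_cases i <;> fin_cases j <;> simp_all [gauge_neg hsymm]
end
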